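/- arXiv:2112.06072 — 7 statements merged into one kernel-verified Lean document; each statement's English description precedes it below -/
import Mathlib

section
/- Let H be a finite simple graph and M a maximum matching in H. Let {u,v} be an edge of M, and for a vertex x write deg^-(x) for the number of neighbors of x that are not covered by M. If deg^-(u) ≥ 1 and deg^-(v) ≥ 1, then deg^-(u) = deg^-(v) = 1, and moreover u and v have the same (unique) uncovered neighbor. -/
/-!
If `u` had an uncovered neighbor `a` and `v` an uncovered neighbor `b ≠ a`, then `a u v b` would be
an augmenting path: exchanging `uv` for `ua` and `vb` gives a larger matching. So every uncovered
neighbor of `u` equals every uncovered neighbor of `v` (`uncovered_neighbors_eq`). As both kinds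
exist, each of the two neighbor sets is the same singleton.
-/

/-- `M` is a matching in the simple graph `H`: a set of edges of `H` that are
pairwise vertex-disjoint. -/
def GraphMatching {V : Type*} (H : SimpleGraph V) (M : Finset (Sym2 V)) : Prop :=
  (∀ e ∈ M, e ∈ H.edgeSet) ∧
    ∀ e ∈ M, ∀ f ∈ M, e ≠ f → ∀ x : V, x ∈ e → x ∉ f

/-- `M` is a maximum matching in `H`: a matching of largest possible cardinality. -/
def MaxGraphMatching {V : Type*} (H : SimpleGraph V) (M : Finset (Sym2 V)) : Prop :=
  GraphMatching H M ∧ ∀ M' : Finset (Sym2 V), GraphMatching H M' → M'.card ≤ M.card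

/-- A vertex is covered by `M` if it is an endpoint of some edge of `M`. -/
def MCovered {V : Type*} (M : Finset (Sym2 V)) (x : V) : Prop :=
  ∃ e ∈ M, x ∈ e

/-- `degMinus H M x` is the number of neighbors of `x` in `H` that are not covered by `M`. -/
noncomputable def degMinus {V : Type*} [Fintype V] (H : SimpleGraph V)
    (M : Finset (Sym2 V)) (x : V) : ℕ :=
  {y : V | H.Adj x y ∧ ¬ MCovered M y}.ncard

/-- There is no augmenting path `a u v b` of length three around an edge `uv` of a maximum
matching. -/
lemma uncovered_neighbors_eq {V : Type*} [DecidableEq V] {H : SimpleGraph V}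
    {M : Finset (Sym2 V)} (hM : MaxGraphMatching H M) {u v a b : V} (huv : s(u, v) ∈ M)
    (hua : H.Adj u a) (ha : ¬ MCovered M a) (hvb : H.Adj v b) (hb : ¬ MCovered M b) :
    a = b := by
  by_contra hab
  obtain ⟨⟨hE, hD⟩, hmax⟩ := hM
  have huv' : u ≠ v := (hE _ huv : H.Adj u v).ne
  have ha' : ∀ e ∈ M, a ∉ e := fun e he h => ha ⟨e, he, h⟩
  have hb' : ∀ e ∈ M, b ∉ e := fun e he h => hb ⟨e, he, h⟩
  have hu' : ∀ e ∈ M.erase s(u, v), u ∉ e := fun e he =>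
    hD _ huv e (Finset.mem_of_mem_erase he) (Finset.ne_of_mem_erase he).symm u (by simp)
  have hv' : ∀ e ∈ M.erase s(u, v), v ∉ e := fun e he =>
    hD _ huv e (Finset.mem_of_mem_erase he) (Finset.ne_of_mem_erase he).symm v (by simp)
  have hub : u ≠ b := fun h => hb' _ huv (by simp [h])
  have hva : v ≠ a := fun h => ha' _ huv (by simp [h])
  have hne : s(u, a) ≠ s(v, b) := by
    simp [huv', hub]
  have h1 : s(v, b) ∉ M.erase s(u, v) := fun h => hv' _ h (by simp)
  have h2 : s(u, a) ∉ insert s(v, b) (M.erase s(u, v)) := by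
    rw [Finset.mem_insert, not_or]
    exact ⟨hne, fun h => hu' _ h (by simp)⟩
  have hmatch : GraphMatching H (insert s(u, a) (insert s(v, b) (M.erase s(u, v)))) := by
    have hua' : ∀ e ∈ M.erase s(u, v), ∀ x, x ∈ s(u, a) → x ∉ e := by
      intro e he x hx
      rcases Sym2.mem_iff.1 hx with rfl | rfl
      exacts [hu' e he, ha' e (Finset.mem_of_mem_erase he)]
    have hvb' : ∀ e ∈ M.erase s(u, v), ∀ x, x ∈ s(v, b) → x ∉ e := by
      intro e he x hx
      rcases Sym2.mem_iff.1 hx with rfl | rfl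
      exacts [hv' e he, hb' e (Finset.mem_of_mem_erase he)]
    have hcross : ∀ x, x ∈ s(u, a) → x ∉ s(v, b) := by
      intro x hx
      rcases Sym2.mem_iff.1 hx with rfl | rfl
      · simp [huv', hub]
      · simp [hva.symm, hab]
    constructor
    · intro e he
      rcases Finset.mem_insert.1 he with rfl | he
      · exact hua
      rcases Finset.mem_insert.1 he with rfl | he
      · exact hvb
      exact hE e (Finset.mem_of_mem_erase he)
    · intro e he f hf hef x hxe hxf
      rcases Finset.mem_insert.1 he with rfl | he <;>
        rcases Finset.mem_insert.1 hf with rfl | hf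
      · exact hef rfl
      · rcases Finset.mem_insert.1 hf with rfl | hf
        exacts [hcross x hxe hxf, hua' f hf x hxe hxf]
      · rcases Finset.mem_insert.1 he with rfl | he
        exacts [hcross x hxf hxe, hua' e he x hxf hxe]
      · rcases Finset.mem_insert.1 he with rfl | he <;>
          rcases Finset.mem_insert.1 hf with rfl | hf
        · exact hef rfl
        · exact hvb' f hf x hxe hxf
        · exact hvb' e he x hxf hxe
        · exact hD e (Finset.mem_of_mem_erase he) f (Finset.mem_of_mem_erase hf) hef x hxe hxf
  have hcard := hmax _ hmatch
  rw [Finset.card_insert_of_notMem h2, Finset.card_insert_of_notMem h1,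
    Finset.card_erase_add_one huv] at hcard
  omega

/-- Let `M` be a maximum matching in a finite simple graph `H` and let `{u,v}` be an
edge of `M`. If `deg⁻(u) ≥ 1` and `deg⁻(v) ≥ 1` then `deg⁻(u) = deg⁻(v) = 1` and
moreover `u` and `v` have the same (unique) uncovered neighbor. -/
theorem stmt_1 {V : Type*} [Fintype V] [DecidableEq V] (H : SimpleGraph V)
    (M : Finset (Sym2 V)) (hM : MaxGraphMatching H M)
    (u v : V) (huv : s(u, v) ∈ M)
    (hu : 1 ≤ degMinus H M u) (hv : 1 ≤ degMinus H M v) :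
    degMinus H M u = 1 ∧ degMinus H M v = 1 ∧
      ∃ w : V, ¬ MCovered M w ∧ H.Adj u w ∧ H.Adj v w := by
  obtain ⟨a, hua, ha⟩ := Set.nonempty_of_ncard_ne_zero (Nat.one_le_iff_ne_zero.1 hu)
  obtain ⟨b, hvb, hb⟩ := Set.nonempty_of_ncard_ne_zero (Nat.one_le_iff_ne_zero.1 hv)
  obtain rfl := uncovered_neighbors_eq hM huv hua ha hvb hb
  refine ⟨Set.ncard_eq_one.2 ⟨a, Set.eq_singleton_iff_unique_mem.2 ⟨⟨hua, ha⟩, ?_⟩⟩,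
    Set.ncard_eq_one.2 ⟨a, Set.eq_singleton_iff_unique_mem.2 ⟨⟨hvb, hb⟩, ?_⟩⟩,
    a, ha, hua, hvb⟩
  · rintro y ⟨huy, hy⟩
    exact uncovered_neighbors_eq hM huv huy hy hvb hb
  · rintro y ⟨hvy, hy⟩
    exact (uncovered_neighbors_eq hM huv hua ha hvy hy).symm
end

section
/- Let H be a finite simple graph with an even number of vertices, let M be a maximum matching in H, let V_M be the set of vertices covered by M and V_M^- the set of vertices not covered by M. Let E^- be the set of edges of H not contained in V_M (i.e., edges with at least one endpoint in V_M^-). Then every edge of E^- has exactly one endpoint in V_M and one in V_M^- (in particular V_M^- is an independent set), and |E^-| ≤ (1/2)·|V_M|·|V_M^-|. -/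
theorem GraphMatching.insert {V : Type*} [DecidableEq V] {H : SimpleGraph V}
    {N : Finset (Sym2 V)} (hN : GraphMatching H N) {x y : V} (hxy : H.Adj x y)
    (hx : ¬ MCovered N x) (hy : ¬ MCovered N y) :
    GraphMatching H (insert s(x, y) N) ∧ (insert s(x, y) N).card = N.card + 1 := by
  have hnot : ∀ e ∈ N, ∀ z ∈ e, z ≠ x ∧ z ≠ y := by
    intro e he z hz
    exact ⟨fun h => hx ⟨e, he, h ▸ hz⟩, fun h => hy ⟨e, he, h ▸ hz⟩⟩
  refine ⟨⟨?_, ?_⟩, ?_⟩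
  · intro e he
    rcases Finset.mem_insert.1 he with rfl | he
    · exact hxy
    · exact hN.1 e he
  · intro e he f hf hef z hze hzf
    rcases Finset.mem_insert.1 he with rfl | he <;> rcases Finset.mem_insert.1 hf with rfl | hf
    · exact hef rfl
    · have := hnot f hf z hzf
      rcases Sym2.mem_iff.1 hze with h | h <;> simp_all
    · have := hnot e he z hze
      rcases Sym2.mem_iff.1 hzf with h | h <;> simp_all
    · exact hN.2 e he f hf hef z hze hzf
  · exact Finset.card_insert_of_notMem fun h => hx ⟨_, h, Sym2.mem_mk_left x y⟩

theorem MCovered.of_insert {V : Type*} [DecidableEq V] {N : Finset (Sym2 V)} {x y z : V}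
    (h : MCovered (insert s(x, y) N) z) : z = x ∨ z = y ∨ MCovered N z := by
  obtain ⟨e, he, hz⟩ := h
  rcases Finset.mem_insert.1 he with rfl | he
  · rcases Sym2.mem_iff.1 hz with h | h <;> simp [h]
  · exact Or.inr (Or.inr ⟨e, he, hz⟩)

theorem MaxGraphMatching.not_adj {V : Type*} [DecidableEq V] {H : SimpleGraph V}
    {M : Finset (Sym2 V)} (hM : MaxGraphMatching H M) {x y : V}
    (hx : ¬ MCovered M x) (hy : ¬ MCovered M y) : ¬ H.Adj x y := by
  intro h
  obtain ⟨h1, h2⟩ := hM.1.insert h hx hy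
  have := hM.2 _ h1
  omega

/-- A maximum matching admits no augmenting path `u - a - b - v` of length three. -/
theorem MaxGraphMatching.eq_of_adj_of_adj {V : Type*} [DecidableEq V] {H : SimpleGraph V}
    {M : Finset (Sym2 V)} (hM : MaxGraphMatching H M) {a b u v : V} (hab : s(a, b) ∈ M)
    (hu : ¬ MCovered M u) (hv : ¬ MCovered M v) (hau : H.Adj a u) (hbv : H.Adj b v) :
    u = v := by
  by_contra huv
  have hmono : ∀ z, MCovered (M.erase s(a, b)) z → MCovered M z := fun z ⟨e, he, hz⟩ =>
    ⟨e, Finset.mem_of_mem_erase he, hz⟩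
  have hfree : ∀ z ∈ s(a, b), ¬ MCovered (M.erase s(a, b)) z := fun z hz ⟨e, he, hze⟩ =>
    hM.1.2 _ hab e (Finset.mem_of_mem_erase he) (Finset.ne_of_mem_erase he).symm z hz hze
  have hN : GraphMatching H (M.erase s(a, b)) :=
    ⟨fun e he => hM.1.1 e (Finset.mem_of_mem_erase he), fun e he f hf =>
      hM.1.2 e (Finset.mem_of_mem_erase he) f (Finset.mem_of_mem_erase hf)⟩
  have ha : MCovered M a := ⟨_, hab, Sym2.mem_mk_left a b⟩
  have hb : MCovered M b := ⟨_, hab, Sym2.mem_mk_right a b⟩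
  have hne : a ≠ b := (show H.Adj a b from hM.1.1 _ hab).ne
  obtain ⟨h1, c1⟩ := hN.insert hau (hfree a (Sym2.mem_mk_left a b)) (mt (hmono u) hu)
  obtain ⟨h2, c2⟩ := h1.insert hbv
    (fun h => by
      rcases h.of_insert with h | h | h
      · exact hne h.symm
      · exact hu (h ▸ hb)
      · exact hfree b (Sym2.mem_mk_right a b) h)
    (fun h => by
      rcases h.of_insert with h | h | h
      · exact hv (h ▸ ha)
      · exact huv h.symm
      · exact hv (hmono v h))
  have := hM.2 _ h2
  have := Finset.card_erase_add_one hab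
  omega

theorem GraphMatching.card_covered {V : Type*} [Fintype V] [DecidableEq V] {H : SimpleGraph V}
    {M : Finset (Sym2 V)} [DecidablePred (MCovered M)] (hM : GraphMatching H M) :
    (Finset.univ.filter (MCovered M)).card = 2 * M.card := by
  have h : Finset.univ.filter (MCovered M) = M.biUnion Sym2.toFinset := by
    ext x
    simp [MCovered]
  rw [h, Finset.card_biUnion, Finset.sum_congr rfl (g := fun _ => 2), Finset.sum_const, smul_eq_mul,
    mul_comm]
  · intro e he
    exact Sym2.card_toFinset_of_not_isDiag e (H.not_isDiag_of_mem_edgeSet (hM.1 e he))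
  · intro e he f hf hef
    refine Finset.disjoint_left.2 fun x hx hx' => ?_
    exact hM.2 e he f hf hef x (Sym2.mem_toFinset.1 hx) (Sym2.mem_toFinset.1 hx')

/-- An edge of `M` accounts for at most `|U|` edges into the set `U` of uncovered vertices. Evenness
of `|U|` excludes the case of a single uncovered vertex adjacent to both ends of the edge. -/
theorem MaxGraphMatching.card_incident_le {V : Type*} [Fintype V] [DecidableEq V]
    {H : SimpleGraph V} [DecidableRel H.Adj] {M : Finset (Sym2 V)} (hM : MaxGraphMatching H M)
    {U : Finset V} (hU : ∀ x, x ∈ U ↔ ¬ MCovered M x) (hEven : Even U.card) {a b : V}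
    (hab : s(a, b) ∈ M) :
    (U.filter (H.Adj a)).card + (U.filter (H.Adj b)).card ≤ U.card := by
  have hA := Finset.card_filter_le U (H.Adj a)
  have hB := Finset.card_filter_le U (H.Adj b)
  rcases (U.filter (H.Adj a)).eq_empty_or_nonempty with h | ⟨u, hu⟩
  · simpa [h] using hB
  rcases (U.filter (H.Adj b)).eq_empty_or_nonempty with h | ⟨v, hv⟩
  · simpa [h] using hA
  have key : ∀ x ∈ U.filter (H.Adj a), ∀ y ∈ U.filter (H.Adj b), x = y := by
    intro x hx y hy
    rw [Finset.mem_filter, hU] at hx hy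
    exact hM.eq_of_adj_of_adj hab hx.1 hy.1 hx.2 hy.2
  have hA1 : (U.filter (H.Adj a)).card ≤ 1 :=
    Finset.card_le_one.2 fun x hx y hy => (key x hx v hv).trans (key y hy v hv).symm
  have hB1 : (U.filter (H.Adj b)).card ≤ 1 :=
    Finset.card_le_one.2 fun x hx y hy => (key u hu x hx).symm.trans (key u hu y hy)
  have hpos : 0 < U.card := Finset.card_pos.2 ⟨u, (Finset.mem_filter.1 hu).1⟩
  obtain ⟨k, hk⟩ := hEven
  omega

/-- Let `H` be a finite simple graph with an even number of vertices and `M` a maximum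
matching in `H`. Let `V_M` be the set of covered vertices, `V_M⁻` the set of uncovered
vertices, and `E⁻` the set of edges of `H` having at least one endpoint in `V_M⁻`.
Then every edge of `E⁻` has exactly one endpoint in `V_M` and one in `V_M⁻`, and
`|E⁻| ≤ (1/2)·|V_M|·|V_M⁻|`. -/
theorem stmt_2 {V : Type*} [Fintype V] [DecidableEq V] (H : SimpleGraph V)
    (M : Finset (Sym2 V)) (hEven : Even (Fintype.card V))
    (hM : MaxGraphMatching H M)
    (VM : Set V) (hVM : VM = {x : V | MCovered M x})
    (VMc : Set V) (hVMc : VMc = {x : V | ¬ MCovered M x})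
    (Eminus : Set (Sym2 V))
    (hE : Eminus = {e : Sym2 V | e ∈ H.edgeSet ∧ ∃ x ∈ e, ¬ MCovered M x}) :
    (∀ e ∈ Eminus, ∃ x y : V, e = s(x, y) ∧ x ∈ VM ∧ y ∈ VMc) ∧
      (Eminus.ncard : ℝ) ≤ 1/2 * VM.ncard * VMc.ncard := by
  classical
  subst hVM hVMc hE
  have hsplit : ∀ e ∈ {e : Sym2 V | e ∈ H.edgeSet ∧ ∃ x ∈ e, ¬ MCovered M x},
      ∃ x y : V, e = s(x, y) ∧ MCovered M x ∧ ¬ MCovered M y := by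
    rintro e ⟨he, y, hy, hyc⟩
    obtain ⟨x, rfl⟩ := hy
    refine ⟨x, y, Sym2.eq_swap, ?_, hyc⟩
    by_contra hx
    exact hM.not_adj hyc hx he
  refine ⟨hsplit, ?_⟩
  set U : Finset V := Finset.univ.filter (fun x => ¬ MCovered M x) with hUdef
  have hU : ∀ x, x ∈ U ↔ ¬ MCovered M x := by simp [hUdef]
  have hcov := hM.1.card_covered
  have hsum : (Finset.univ.filter (MCovered M)).card + U.card = Fintype.card V :=
    Finset.card_filter_add_card_filter_not (s := Finset.univ) (MCovered M)
  have hUeven : Even U.card := by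
    obtain ⟨k, hk⟩ := hEven
    exact ⟨k - M.card, by omega⟩
  have hVM : Set.ncard {x : V | MCovered M x} = 2 * M.card := by
    rw [← hcov, ← Set.ncard_coe_finset]
    simp
  have hVMc : Set.ncard {x : V | ¬ MCovered M x} = U.card := by
    rw [← Set.ncard_coe_finset]
    simp [hUdef]
  -- `D e` is the set of edges joining an endpoint of `e` to an uncovered vertex.
  let D : Sym2 V → Finset (Sym2 V) := fun e =>
    e.toFinset.biUnion fun a => (U.filter (H.Adj a)).image fun u => s(a, u)
  have hD : ∀ e ∈ M, (D e).card ≤ U.card := by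
    intro e he
    induction e using Sym2.ind with
    | _ a b =>
      have hne : a ≠ b := (show H.Adj a b from hM.1.1 _ he).ne
      refine le_trans ?_ (hM.card_incident_le hU hUeven he)
      refine Finset.card_biUnion_le.trans ?_
      rw [Sym2.toFinset_mk_eq, Finset.sum_pair hne]
      exact add_le_add Finset.card_image_le Finset.card_image_le
  have hsub : {e : Sym2 V | e ∈ H.edgeSet ∧ ∃ x ∈ e, ¬ MCovered M x} ⊆
      ((M.biUnion D : Finset (Sym2 V)) : Set (Sym2 V)) := by
    intro f hf
    obtain ⟨x, y, rfl, ⟨e, he, hxe⟩, hy⟩ := hsplit f hf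
    refine Finset.mem_biUnion.2 ⟨e, he, Finset.mem_biUnion.2 ⟨x, Sym2.mem_toFinset.2 hxe, ?_⟩⟩
    exact Finset.mem_image.2 ⟨y, Finset.mem_filter.2 ⟨(hU y).2 hy, hf.1⟩, rfl⟩
  have hcard : Set.ncard {e : Sym2 V | e ∈ H.edgeSet ∧ ∃ x ∈ e, ¬ MCovered M x} ≤
      M.card * U.card := by
    refine (Set.ncard_le_ncard hsub (Finset.finite_toSet _)).trans ?_
    rw [Set.ncard_coe_finset]
    exact Finset.card_biUnion_le_card_mul M D U.card hD
  rw [hVM, hVMc]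
  have : (Set.ncard {e : Sym2 V | e ∈ H.edgeSet ∧ ∃ x ∈ e, ¬ MCovered M x} : ℝ) ≤
      M.card * U.card := by exact_mod_cast hcard
  push_cast
  linarith
end

section
/- Let δ be a real number with 6/5 < δ < 2. For every real m with 0 ≤ m ≤ 1/2, min( 2 − (4 − 2δ)m , δ/(1 − 4m(1/2 − m)) ) ≤ 1 + √((δ − 1)(3 − δ)). -/
/-!
Put `d = 2 - δ ∈ (0, 4/5)` and `s = √((δ - 1)(3 - δ))`, so that `s² + d² = 1`. With `d = sin θ` and
`s = cos θ`, let `t = (1 - s)/d = tan (θ/2)`. The first term, `2 - 2dm`, is at most `1 + s` exactly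
when `2m ≥ t`. The second term equals `δ / ((2m)² - 2m + 1)`; at `2m = t` it takes the value
`2 / (1 + t²) = 1 + s`, and it is increasing in `m` for `2m ≤ 1/2`. Since `δ > 6/5` forces
`t < 1/2`, it is at most `1 + s` whenever `2m ≤ t`. So for every `m` one of the two terms is small
enough.
-/

/-- Let `6/5 < δ < 2`. For every `m ∈ [0, 1/2]`,
`min(2 − (4 − 2δ)m, δ/(1 − 4m(1/2 − m))) ≤ 1 + √((δ − 1)(3 − δ))`. -/
theorem stmt_4 (δ : ℝ) (hδ1 : 6/5 < δ) (hδ2 : δ < 2)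
    (m : ℝ) (hm0 : 0 ≤ m) (hm1 : m ≤ 1/2) :
    min (2 - (4 - 2*δ)*m) (δ / (1 - 4*m*(1/2 - m)))
      ≤ 1 + Real.sqrt ((δ - 1) * (3 - δ)) := by
  have hs2 : Real.sqrt ((δ - 1) * (3 - δ)) ^ 2 = (δ - 1) * (3 - δ) :=
    Real.sq_sqrt (by nlinarith)
  have hs : 3/5 < Real.sqrt ((δ - 1) * (3 - δ)) :=
    Real.lt_sqrt_of_sq_lt (by nlinarith)
  set s := Real.sqrt ((δ - 1) * (3 - δ))
  have hd : 0 < 2 - δ := by linarith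
  obtain ⟨t, ht⟩ : ∃ t, t = (1 - s) / (2 - δ) := ⟨_, rfl⟩
  have htd : t * (2 - δ) = 1 - s := by rw [ht]; field_simp
  have hts : (1 + s) * t = 2 - δ := by
    apply mul_right_cancel₀ hd.ne'
    linear_combination (1 + s) * htd - hs2
  have ht2 : t < 1/2 := by
    by_contra! h
    nlinarith
  rcases le_total t (2 * m) with h | h
  · refine (min_le_left _ _).trans ?_
    nlinarith [mul_le_mul_of_nonneg_right h hd.le]
  · refine (min_le_right _ _).trans ?_
    rw [div_le_iff₀ (by nlinarith [sq_nonneg (4 * m - 1)])]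
    have key : (1 + s) * (t ^ 2 - t + 1) = δ := by
      linear_combination (t - 1) * hts + htd
    -- The quadratic `x² - x + 1` is larger at `x = 2m` than at `x = t`.
    have hmono : 0 ≤ (1 + s) * ((t - 2 * m) * (1 - t - 2 * m)) :=
      mul_nonneg (by linarith) (mul_nonneg (by linarith) (by linarith))
    linarith
end

section
/- Let δ be a real number with 6/5 < δ < 2, and set m* = (1 − δ/2)/(1 + δ/2) = (2 − δ)/(2 + δ). Then for every real m with 0 ≤ m ≤ m*, (δ − ((5/2)δ − 3)m)/(4m² − 2m + 1) ≤ 1 + δ/2, and equality holds at m = m*. In particular the maximum of (δ − ((5/2)δ − 3)m)/(4m² − 2m + 1) over m ∈ [0, m*] equals 1 + δ/2 and is attained at m = m*. -/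
/-! Clearing the positive denominator, the inequality says that
`(1 + δ/2)(4m² - 2m + 1) - (δ - (5/2 δ - 3)m) = ((2 - δ) - (2 + δ)m)(1/2 - 2m)` is nonnegative.
The first factor vanishes exactly at `m*` and is nonnegative for `m ≤ m*`; the second is positive
there because `δ > 6/5` is equivalent to `m* < 1/4`. -/


/-- Let `6/5 < δ < 2` and set `m* = (1 − δ/2)/(1 + δ/2) = (2 − δ)/(2 + δ)`. Then
for every `m ∈ [0, m*]`, `(δ − ((5/2)δ − 3)m)/(4m² − 2m + 1) ≤ 1 + δ/2`, with
equality at `m = m*`. In particular the maximum over `[0, m*]` equals `1 + δ/2`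
and is attained at `m*`. -/
theorem stmt_6 (δ mstar : ℝ) (hδ1 : 6/5 < δ) (hδ2 : δ < 2)
    (hm : mstar = (1 - δ/2) / (1 + δ/2)) :
    mstar = (2 - δ) / (2 + δ) ∧
    (∀ m : ℝ, 0 ≤ m → m ≤ mstar →
      (δ - (5/2*δ - 3)*m) / (4*m^2 - 2*m + 1) ≤ 1 + δ/2) ∧
    (δ - (5/2*δ - 3)*mstar) / (4*mstar^2 - 2*mstar + 1) = 1 + δ/2 ∧
    IsGreatest
      ((fun m : ℝ => (δ - (5/2*δ - 3)*m) / (4*m^2 - 2*m + 1)) '' Set.Icc 0 mstar)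
      (1 + δ/2) := by
  have hpos : 0 < 2 + δ := by linarith
  have hm' : mstar = (2 - δ) / (2 + δ) := by
    rw [hm]
    field_simp
  have hmul : (2 + δ) * mstar = 2 - δ := by
    rw [hm']
    field_simp
  have hden : ∀ m : ℝ, 0 < 4*m^2 - 2*m + 1 := fun m => by
    nlinarith [sq_nonneg (4*m - 1)]
  have hquarter : mstar < 1/4 := by
    rw [hm', div_lt_iff₀ hpos]
    linarith
  have hle : ∀ m : ℝ, 0 ≤ m → m ≤ mstar →
      (δ - (5/2*δ - 3)*m) / (4*m^2 - 2*m + 1) ≤ 1 + δ/2 := by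
    intro m _ hmle
    rw [div_le_iff₀ (hden m)]
    have h1 : 0 ≤ (2 - δ) - (2 + δ)*m := by
      have := mul_le_mul_of_nonneg_left hmle hpos.le
      linarith
    have h2 : 0 ≤ 1/2 - 2*m := by linarith
    linarith [mul_nonneg h1 h2]
  have heq : (δ - (5/2*δ - 3)*mstar) / (4*mstar^2 - 2*mstar + 1) = 1 + δ/2 := by
    rw [div_eq_iff (hden mstar).ne']
    linear_combination (1/2 - 2*mstar) * hmul
  have hnonneg : 0 ≤ mstar := by
    rw [hm']
    exact div_nonneg (by linarith) hpos.le
  refine ⟨hm', hle, heq, ⟨mstar, ⟨hnonneg, le_rfl⟩, heq⟩, ?_⟩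
  rintro _ ⟨m, ⟨h0, h1⟩, rfl⟩
  exact hle m h0 h1
end

section
/- Let δ be a real number with 6/5 < δ < 2 and set δ₁ = 3/2 − δ/4. Then for every real m with 0 ≤ m ≤ 1/2, min( 2 − (4 − 2δ₁)m , (δ − ((5/2)δ − 3)m)/(4m² − 2m + 1) ) ≤ 1 + δ/2. -/
/-- Let `6/5 < δ < 2` and `δ₁ = 3/2 − δ/4`. Then for every `m ∈ [0, 1/2]`,
`min(2 − (4 − 2δ₁)m, (δ − ((5/2)δ − 3)m)/(4m² − 2m + 1)) ≤ 1 + δ/2`. -/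
theorem stmt_9 (δ δ₁ : ℝ) (hδ1 : 6/5 < δ) (hδ2 : δ < 2)
    (hδ₁ : δ₁ = 3/2 - δ/4)
    (m : ℝ) (hm0 : 0 ≤ m) (hm1 : m ≤ 1/2) :
    min (2 - (4 - 2*δ₁)*m) ((δ - (5/2*δ - 3)*m) / (4*m^2 - 2*m + 1))
      ≤ 1 + δ/2 := by
  -- The first entry is at most `1 + δ/2` exactly when `m ≥ (2 - δ)/(2 + δ)`.
  rcases le_total (2 - δ) ((2 + δ)*m) with h | h
  · apply min_le_of_left_le
    subst hδ₁
    linarith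
  · apply min_le_of_right_le
    have hpos : 0 < 4*m^2 - 2*m + 1 := by nlinarith [sq_nonneg (4*m - 1)]
    -- `(2 - δ)/(2 + δ) < 1/4`, which is where `6/5 < δ` is needed.
    have hm : 4*m ≤ 1 := by nlinarith
    rw [div_le_iff₀ hpos]
    -- After clearing the denominator, right side minus left side is
    -- `(1 - 4m)((2 - δ) - (2 + δ)m)/2`.
    nlinarith [mul_nonneg (sub_nonneg.2 hm) (sub_nonneg.2 h)]
end

section
/- Let V be a finite set of even cardinality, let c be a coloring assigning each unordered pair of distinct elements of V a color in {1,2,3}, and let M be a round-maximal perfect matching of V. Then for any two distinct pairs {u,v} and {w,z} of M, at most one of the two edges {u,w} and {v,z} is free with respect to M and c. -/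
/-!
Suppose both `{u, w}` and `{v, z}` are free. Their colors are then smaller than
`k = max (c {u, v}) (c {w, z})`, so replacing the pairs `{u, v}, {w, z}` of `M` by
`{u, w}, {v, z}` gives a perfect matching `M'` (`isPM_swap`) in which two pairs with larger
color `k` have become two pairs of color less than `k`. If `k = 3` this increases `m₁ + m₂`;
if `k = 2` it keeps `m₁ + m₂` and increases `m₁`; and `k = 1` is impossible. Each case
contradicts the lexicographic maximality of `M`.
-/

/-- `M` is a perfect matching of the vertex set `V`: a partition of `V` into pairs,
viewed as a finset of non-diagonal unordered pairs covering each vertex exactly once. -/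
def IsPM {V : Type*} (M : Finset (Sym2 V)) : Prop :=
  (∀ e ∈ M, ¬ e.IsDiag) ∧ ∀ x : V, ∃! e : Sym2 V, e ∈ M ∧ x ∈ e

/-- `mcount c M i` is the number of pairs of `M` having color `i` under the coloring `c`. -/
def mcount {V : Type*} (c : Sym2 V → ℕ) (M : Finset (Sym2 V)) (i : ℕ) : ℕ :=
  (M.filter fun e => c e = i).card

/-- `M` is a round-maximal perfect matching: it lexicographically maximizes
`(m₁ + m₂, m₁)` among all perfect matchings of `V`. -/
def RoundMaximal {V : Type*} (c : Sym2 V → ℕ) (M : Finset (Sym2 V)) : Prop :=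
  IsPM M ∧ ∀ M' : Finset (Sym2 V), IsPM M' →
    mcount c M' 1 + mcount c M' 2 < mcount c M 1 + mcount c M 2 ∨
    (mcount c M' 1 + mcount c M' 2 = mcount c M 1 + mcount c M 2 ∧
      mcount c M' 1 ≤ mcount c M 1)

/-- An edge `e` (a non-diagonal pair not in `M`) is free with respect to `M` and `c`
if `c e` is strictly less than the color of the `M`-pair containing at least one of
the endpoints of `e`. -/
def IsFreeEdge {V : Type*} (c : Sym2 V → ℕ) (M : Finset (Sym2 V)) (e : Sym2 V) : Prop :=
  e ∉ M ∧ ¬ e.IsDiag ∧ ∃ (x : V) (f : Sym2 V), x ∈ e ∧ f ∈ M ∧ x ∈ f ∧ c e < c f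

theorem IsPM.eq_of_mem {V : Type*} {M : Finset (Sym2 V)} (hM : IsPM M) {x : V} {e f : Sym2 V}
    (he : e ∈ M) (hf : f ∈ M) (hxe : x ∈ e) (hxf : x ∈ f) : e = f :=
  (hM.2 x).unique ⟨he, hxe⟩ ⟨hf, hxf⟩

theorem mcount_insert {V : Type*} [DecidableEq V] (c : Sym2 V → ℕ) {S : Finset (Sym2 V)}
    {e : Sym2 V} (he : e ∉ S) (i : ℕ) :
    mcount c (insert e S) i = mcount c S i + if c e = i then 1 else 0 := by
  unfold mcount
  rw [Finset.filter_insert]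
  split_ifs with h
  · rw [Finset.card_insert_of_notMem (by simp [he])]
  · rfl

/-- An edge across two matching pairs that is free has color below the larger color of
the two pairs, as these are the only pairs of `M` meeting it. -/
theorem IsFreeEdge.lt_max {V : Type*} {c : Sym2 V → ℕ} {M : Finset (Sym2 V)} (hM : IsPM M)
    {a b : V} {e f : Sym2 V} (he : e ∈ M) (hf : f ∈ M) (ha : a ∈ e) (hb : b ∈ f)
    (h : IsFreeEdge c M s(a, b)) : c s(a, b) < max (c e) (c f) := by
  obtain ⟨-, -, x, g, hx, hg, hxg, hlt⟩ := h
  rcases Sym2.mem_iff.1 hx with rfl | rfl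
  · rw [hM.eq_of_mem hg he hxg ha] at hlt
    exact lt_max_of_lt_left hlt
  · rw [hM.eq_of_mem hg hf hxg hb] at hlt
    exact lt_max_of_lt_right hlt

/-- Exchanging partners between two distinct pairs of a perfect matching gives a perfect
matching. -/
theorem isPM_swap {V : Type*} [DecidableEq V] {M : Finset (Sym2 V)} (hM : IsPM M)
    {u v w z : V} (huv : s(u, v) ∈ M) (hwz : s(w, z) ∈ M) (hne : s(u, v) ≠ s(w, z)) :
    IsPM (insert s(u, w) (insert s(v, z) ((M.erase s(u, v)).erase s(w, z)))) := by
  have disj : ∀ x, x ∈ s(u, v) → x ∈ s(w, z) → False := fun x h1 h2 =>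
    hne (hM.eq_of_mem huv hwz h1 h2)
  have huw : u ≠ w := by rintro rfl; exact disj u (by simp) (by simp)
  have hvz : v ≠ z := by rintro rfl; exact disj v (by simp) (by simp)
  have huz : u ≠ z := by rintro rfl; exact disj u (by simp) (by simp)
  have hvw : v ≠ w := by rintro rfl; exact disj v (by simp) (by simp)
  have huv' : u ≠ v := by simpa using hM.1 _ huv
  have hwz' : w ≠ z := by simpa using hM.1 _ hwz
  have rest : ∀ x e, e ∈ (M.erase s(u, v)).erase s(w, z) → x ∈ e →
      x ≠ u ∧ x ≠ v ∧ x ≠ w ∧ x ≠ z := by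
    intro x e he hx
    simp only [Finset.mem_erase] at he
    refine ⟨?_, ?_, ?_, ?_⟩ <;> rintro rfl
    · exact he.2.1 (hM.eq_of_mem he.2.2 huv hx (by simp))
    · exact he.2.1 (hM.eq_of_mem he.2.2 huv hx (by simp))
    · exact he.1 (hM.eq_of_mem he.2.2 hwz hx (by simp))
    · exact he.1 (hM.eq_of_mem he.2.2 hwz hx (by simp))
  refine ⟨?_, fun x => ?_⟩
  · intro e he
    simp only [Finset.mem_insert] at he
    rcases he with rfl | rfl | he
    · simpa using huw
    · simpa using hvz
    · exact hM.1 e (Finset.mem_of_mem_erase (Finset.mem_of_mem_erase he))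
  · by_cases h1 : x = u ∨ x = w
    · refine ⟨s(u, w), ⟨by simp, by simpa using h1⟩, ?_⟩
      rintro f ⟨hf, hxf⟩
      simp only [Finset.mem_insert] at hf
      rcases hf with rfl | rfl | hf
      · rfl
      · rw [Sym2.mem_iff] at hxf; grind
      · have := rest x f hf hxf; tauto
    by_cases h2 : x = v ∨ x = z
    · refine ⟨s(v, z), ⟨by simp, by simpa using h2⟩, ?_⟩
      rintro f ⟨hf, hxf⟩
      simp only [Finset.mem_insert] at hf
      rcases hf with rfl | rfl | hf
      · rw [Sym2.mem_iff] at hxf; grind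
      · rfl
      · have := rest x f hf hxf; tauto
    obtain ⟨e, ⟨he, hxe⟩, huniq⟩ := hM.2 x
    refine ⟨e, ⟨?_, hxe⟩, ?_⟩
    · simp only [Finset.mem_insert, Finset.mem_erase]
      refine Or.inr (Or.inr ⟨?_, ?_, he⟩) <;> rintro rfl <;>
        rw [Sym2.mem_iff] at hxe <;> tauto
    · rintro f ⟨hf, hxf⟩
      simp only [Finset.mem_insert] at hf
      rcases hf with rfl | rfl | hf
      · rw [Sym2.mem_iff] at hxf; tauto
      · rw [Sym2.mem_iff] at hxf; tauto
      · exact huniq f ⟨Finset.mem_of_mem_erase (Finset.mem_of_mem_erase hf), hxf⟩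

/-- Let `V` be a finite set of even cardinality, `c` a coloring of edges by colors in
`{1,2,3}`, and `M` a round-maximal perfect matching. Then for any two distinct pairs
`{u,v}` and `{w,z}` of `M`, at most one of the edges `{u,w}` and `{v,z}` is free. -/
theorem stmt_10 {V : Type*} [Fintype V] [DecidableEq V]
    (hV : Even (Fintype.card V)) (c : Sym2 V → ℕ)
    (hc : ∀ e : Sym2 V, ¬ e.IsDiag → c e ∈ ({1, 2, 3} : Set ℕ))
    (M : Finset (Sym2 V)) (hM : RoundMaximal c M)
    (u v w z : V) (huv : s(u, v) ∈ M) (hwz : s(w, z) ∈ M)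
    (hne : s(u, v) ≠ s(w, z)) :
    ¬ (IsFreeEdge c M s(u, w) ∧ IsFreeEdge c M s(v, z)) := by
  rintro ⟨h1, h2⟩
  obtain ⟨hPM, hmax⟩ := hM
  have l1 := h1.lt_max hPM huv hwz (Sym2.mem_mk_left u v) (Sym2.mem_mk_left w z)
  have l2 := h2.lt_max hPM huv hwz (Sym2.mem_mk_right u v) (Sym2.mem_mk_right w z)
  have hopt := hmax _ (isPM_swap hPM huv hwz hne)
  have c1 := hc _ (hPM.1 _ huv)
  have c2 := hc _ (hPM.1 _ hwz)
  have c3 := hc _ h1.2.1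
  have c4 := hc _ h2.2.1
  have hwz1 : s(w, z) ∈ M.erase s(u, v) := Finset.mem_erase.2 ⟨hne.symm, hwz⟩
  have hMdec : M = insert s(u, v) (insert s(w, z) ((M.erase s(u, v)).erase s(w, z))) := by
    rw [Finset.insert_erase hwz1, Finset.insert_erase huv]
  -- The two new pairs differ: otherwise `u ∈ s(v, z)`, so `u = v` or `u` lies in both old pairs.
  have hnew : s(u, w) ≠ s(v, z) := by
    intro h
    have hu : u ∈ s(v, z) := h ▸ Sym2.mem_mk_left u w
    rcases Sym2.mem_iff.1 hu with rfl | rfl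
    · exact hPM.1 _ huv (by simp)
    · exact hne (hPM.eq_of_mem huv hwz (Sym2.mem_mk_left _ _) (Sym2.mem_mk_right _ _))
  set R := (M.erase s(u, v)).erase s(w, z) with hR
  have hRM : ∀ e ∈ R, e ∈ M := fun e he =>
    Finset.mem_of_mem_erase (Finset.mem_of_mem_erase he)
  have n1 : s(u, v) ∉ insert s(w, z) R := by simp [hR, hne]
  have n2 : s(w, z) ∉ R := by simp [hR]
  have n3 : s(v, z) ∉ R := fun h => h2.1 (hRM _ h)
  have n4 : s(u, w) ∉ insert s(v, z) R := by
    rw [Finset.mem_insert, not_or]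
    exact ⟨hnew, fun h => h1.1 (hRM _ h)⟩
  have old : ∀ i, mcount c M i = mcount c R i + (if c s(w, z) = i then 1 else 0)
      + if c s(u, v) = i then 1 else 0 := by
    intro i
    rw [← mcount_insert c n2, ← mcount_insert c n1, ← hMdec]
  rw [old 1, old 2, mcount_insert c n4, mcount_insert c n3, mcount_insert c n4,
    mcount_insert c n3] at hopt
  simp only [Set.mem_insert_iff, Set.mem_singleton_iff] at c1 c2 c3 c4
  generalize c s(u, v) = p at *
  generalize c s(w, z) = q at *
  generalize c s(u, w) = r at *
  generalize c s(v, z) = s at *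
  clear old
  rcases c1 with rfl | rfl | rfl <;> rcases c2 with rfl | rfl | rfl <;>
    rcases c3 with rfl | rfl | rfl <;> rcases c4 with rfl | rfl | rfl <;>
    simp at l1 l2 hopt <;> omega
end

section
/- Let V be a finite set of even cardinality, let c be a coloring assigning each unordered pair of distinct elements of V a color in {1,2,3}, and let M be a round-maximal perfect matching of V. Let A be the set of vertices belonging to M-pairs of color 1 and B the set of vertices belonging to M-pairs of color 2. Then the number of edges {x,y} with x ∈ A, y ∈ B and c({x,y}) = 1 is at most (1/2)·|A|·|B|. -/
/-- The exchange step: replacing the pairs `s(a, a')`, `s(b, b')` of a perfect matching by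
`s(a, b)`, `s(a', b')` gives a perfect matching. -/
theorem IsPM.swap {V : Type*} [DecidableEq V] {M : Finset (Sym2 V)} (hM : IsPM M)
    {a a' b b' : V} (ha : s(a, a') ∈ M) (hb : s(b, b') ∈ M) (hne : s(a, a') ≠ s(b, b')) :
    IsPM (insert s(a, b) (insert s(a', b') ((M.erase s(a, a')).erase s(b, b')))) := by
  have hab : ∀ x, x ∈ s(a, a') → x ∉ s(b, b') := fun x h1 h2 => hne (hM.eq_of_mem ha hb h1 h2)
  have haa : a ≠ a' := by simpa using hM.1 _ ha
  have hbb : b ≠ b' := by simpa using hM.1 _ hb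
  simp only [Sym2.mem_iff] at hab
  have hA : ∀ e ∈ M, e ≠ s(a, a') → ∀ x, x ∈ e → x ≠ a ∧ x ≠ a' := by
    intro e he hn x hx
    refine ⟨?_, ?_⟩ <;> rintro rfl <;> exact hn (hM.eq_of_mem he ha hx (by simp))
  have hB : ∀ e ∈ M, e ≠ s(b, b') → ∀ x, x ∈ e → x ≠ b ∧ x ≠ b' := by
    intro e he hn x hx
    refine ⟨?_, ?_⟩ <;> rintro rfl <;> exact hn (hM.eq_of_mem he hb hx (by simp))
  refine ⟨?_, fun x => ?_⟩
  · intro e he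
    simp only [Finset.mem_insert, Finset.mem_erase] at he
    rcases he with rfl | rfl | ⟨-, -, he⟩
    · simp only [Sym2.mk_isDiag_iff]; grind
    · simp only [Sym2.mk_isDiag_iff]; grind
    · exact hM.1 e he
  · simp only [Finset.mem_insert, Finset.mem_erase]
    by_cases h1 : x ∈ s(a, b)
    · refine ⟨s(a, b), ⟨.inl rfl, h1⟩, ?_⟩
      rintro e ⟨rfl | rfl | ⟨h2, h3, h4⟩, hx⟩
      · rfl
      · simp only [Sym2.mem_iff] at h1 hx; grind
      · have := hA e h4 h3 x hx
        have := hB e h4 h2 x hx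
        simp only [Sym2.mem_iff] at h1; grind
    by_cases h1' : x ∈ s(a', b')
    · refine ⟨s(a', b'), ⟨.inr (.inl rfl), h1'⟩, ?_⟩
      rintro e ⟨rfl | rfl | ⟨h2, h3, h4⟩, hx⟩
      · exact absurd hx h1
      · rfl
      · have := hA e h4 h3 x hx
        have := hB e h4 h2 x hx
        simp only [Sym2.mem_iff] at h1'; grind
    obtain ⟨e, ⟨he, hx⟩, hu⟩ := hM.2 x
    refine ⟨e, ⟨.inr (.inr ⟨?_, ?_, he⟩), hx⟩, ?_⟩
    · rintro rfl; simp only [Sym2.mem_iff] at h1 h1' hx; grind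
    · rintro rfl; simp only [Sym2.mem_iff] at h1 h1' hx; grind
    · rintro f ⟨rfl | rfl | ⟨h2, h3, h4⟩, hx'⟩
      · exact absurd hx' h1
      · exact absurd hx' h1'
      · exact hu f ⟨h4, hx'⟩

theorem RoundMaximal.no_swap {V : Type*} [DecidableEq V] {c : Sym2 V → ℕ} {M : Finset (Sym2 V)}
    (hM : RoundMaximal c M) {a a' b b' : V} (ha : s(a, a') ∈ M) (hb : s(b, b') ∈ M)
    (hca : c s(a, a') = 1) (hcb : c s(b, b') = 2) (h1 : c s(a, b) = 1) : c s(a', b') ≠ 1 := by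
  intro h2
  have hne : s(a, a') ≠ s(b, b') := fun h => by rw [h] at hca; omega
  have hab : ∀ x, x ∈ s(a, a') → x ∉ s(b, b') := fun x h1 h2 => hne (hM.1.eq_of_mem ha hb h1 h2)
  have haa : a ≠ a' := by simpa using hM.1.1 _ ha
  have hn1 : s(a, b) ∉ M := fun h =>
    hab b (hM.1.eq_of_mem h ha (x := a) (by simp) (by simp) ▸ Sym2.mem_mk_right a b) (by simp)
  have hn2 : s(a', b') ∉ M := fun h =>
    hab b' (hM.1.eq_of_mem h ha (x := a') (by simp) (by simp) ▸ Sym2.mem_mk_right a' b') (by simp)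
  have hn3 : s(a, b) ≠ s(a', b') := by
    have h := hab a (by simp)
    simp only [Sym2.mem_iff] at h
    simp only [ne_eq, Sym2.eq_iff]; grind
  have h := hM.2 _ (hM.1.swap ha hb hne)
  have e1 : mcount c (insert s(a, b) (insert s(a', b') ((M.erase s(a, a')).erase s(b, b')))) 1
      = mcount c M 1 + 1 := by
    unfold mcount
    have hm : s(a, a') ∈ M.filter fun e => c e = 1 := by simp [ha, hca]
    have hp := Finset.card_pos.mpr ⟨_, hm⟩
    rw [Finset.filter_insert, if_pos h1, Finset.filter_insert, if_pos h2, Finset.filter_erase,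
      Finset.filter_erase, Finset.card_insert_of_notMem (by simp [hn1, hn3]),
      Finset.card_insert_of_notMem (by simp [hn2]),
      Finset.erase_eq_of_notMem (a := s(b, b')) (by simp [hcb]), Finset.card_erase_of_mem hm]
    omega
  have e2 : mcount c (insert s(a, b) (insert s(a', b') ((M.erase s(a, a')).erase s(b, b')))) 2 + 1
      = mcount c M 2 := by
    unfold mcount
    have hm : s(b, b') ∈ M.filter fun e => c e = 2 := by simp [hb, hcb]
    rw [Finset.filter_insert, if_neg (by omega), Finset.filter_insert, if_neg (by omega),
      Finset.filter_erase, Finset.filter_erase,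
      Finset.erase_eq_of_notMem (a := s(a, a')) (by simp [hca]), Finset.card_erase_add_one hm]
  omega

/-- Let `V` be a finite set of even cardinality, `c` a coloring of edges by colors in
`{1,2,3}`, and `M` a round-maximal perfect matching. Let `A` be the set of vertices
belonging to `M`-pairs of color `1` and `B` the set of vertices belonging to `M`-pairs
of color `2`. Then the number of edges `{x,y}` with `x ∈ A`, `y ∈ B` and
`c {x,y} = 1` is at most `(1/2)·|A|·|B|`. -/
theorem stmt_14 {V : Type*} [Fintype V] [DecidableEq V]
    (hV : Even (Fintype.card V)) (c : Sym2 V → ℕ)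
    (hc : ∀ e : Sym2 V, ¬ e.IsDiag → c e ∈ ({1, 2, 3} : Set ℕ))
    (M : Finset (Sym2 V)) (hM : RoundMaximal c M)
    (A B : Set V)
    (hA : A = {x : V | ∃ f ∈ M, x ∈ f ∧ c f = 1})
    (hB : B = {x : V | ∃ f ∈ M, x ∈ f ∧ c f = 2}) :
    ({e : Sym2 V | ∃ x y : V, e = s(x, y) ∧ x ∈ A ∧ y ∈ B ∧ c e = 1}.ncard : ℝ)
      ≤ 1/2 * A.ncard * B.ncard := by
  classical
  have hpm := hM.1
  have hpart : ∀ x : V, ∃ y, s(x, y) ∈ M := by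
    intro x
    obtain ⟨e, ⟨he, hx⟩, -⟩ := hpm.2 x
    obtain ⟨y, rfl⟩ := hx
    exact ⟨y, he⟩
  choose σ hσ using hpart
  have hinj : Function.Injective σ := by
    intro x y h
    have h' := hpm.eq_of_mem (hσ x) (hσ y) (Sym2.mem_mk_right _ _) (h ▸ Sym2.mem_mk_right _ _)
    rw [h] at h'
    exact Sym2.congr_left.mp h'
  have hcol : ∀ i x, (∃ f ∈ M, x ∈ f ∧ c f = i) → c s(x, σ x) = i := by
    rintro i x ⟨f, hf, hx, rfl⟩
    rw [hpm.eq_of_mem hf (hσ x) hx (Sym2.mem_mk_left _ _)]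
  have hσA : ∀ x ∈ A, c s(x, σ x) = 1 ∧ σ x ∈ A := by
    subst hA
    exact fun x hx => ⟨hcol 1 x hx, _, hσ x, Sym2.mem_mk_right _ _, hcol 1 x hx⟩
  have hσB : ∀ x ∈ B, c s(x, σ x) = 2 ∧ σ x ∈ B := by
    subst hB
    exact fun x hx => ⟨hcol 2 x hx, _, hσ x, Sym2.mem_mk_right _ _, hcol 2 x hx⟩
  set P : Finset (V × V) := A.toFinset ×ˢ B.toFinset with hP
  set S : Finset (V × V) := P.filter fun p => c s(p.1, p.2) = 1 with hS
  have hE : {e : Sym2 V | ∃ x y : V, e = s(x, y) ∧ x ∈ A ∧ y ∈ B ∧ c e = 1}.ncard ≤ S.card := by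
    have hsub : {e : Sym2 V | ∃ x y : V, e = s(x, y) ∧ x ∈ A ∧ y ∈ B ∧ c e = 1}
        ⊆ (S.image fun p => s(p.1, p.2) : Finset (Sym2 V)) := by
      rintro e ⟨x, y, rfl, hx, hy, h⟩
      rw [Finset.mem_coe, Finset.mem_image]
      exact ⟨(x, y), by simp [hS, hP, hx, hy, h], rfl⟩
    calc _ ≤ _ := Set.ncard_le_ncard hsub (Finset.finite_toSet _)
      _ = _ := Set.ncard_coe_finset _
      _ ≤ _ := Finset.card_image_le
  have hS2 : S.card ≤ (P.filter fun p => ¬ c s(p.1, p.2) = 1).card := by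
    refine Finset.card_le_card_of_injOn (Prod.map σ σ) ?_ (hinj.prodMap hinj).injOn
    rintro ⟨x, y⟩ h
    simp only [hS, hP, Finset.coe_filter, Finset.mem_product, Set.mem_toFinset,
      Set.mem_ofPred_eq] at h
    obtain ⟨⟨hx, hy⟩, h⟩ := h
    simp only [hP, Finset.coe_filter, Finset.mem_product, Set.mem_toFinset, Set.mem_ofPred_eq,
      Prod.map_apply]
    exact ⟨⟨(hσA x hx).2, (hσB y hy).2⟩,
      hM.no_swap (hσ x) (hσ y) (hσA x hx).1 (hσB y hy).1 h⟩
  have hsum := P.card_filter_add_card_filter_not fun p => c s(p.1, p.2) = 1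
  rw [← hS] at hsum
  have hPc : P.card = A.ncard * B.ncard := by
    rw [hP, Finset.card_product, Set.ncard_eq_toFinset_card', Set.ncard_eq_toFinset_card']
  have hfin : 2 * {e : Sym2 V | ∃ x y : V, e = s(x, y) ∧ x ∈ A ∧ y ∈ B ∧ c e = 1}.ncard
      ≤ A.ncard * B.ncard := by omega
  have hfinR : (2 : ℝ) * {e : Sym2 V | ∃ x y : V, e = s(x, y) ∧ x ∈ A ∧ y ∈ B ∧ c e = 1}.ncard
      ≤ A.ncard * B.ncard := by exact_mod_cast hfin
  linarith
end
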